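/- arXiv:2012.08878 — 2 statements merged into one kernel-verified Lean document; each statement's English description precedes it below -/
import Mathlib

section
/- Let P be a set of strings over Σ. Suppose w₀ is a linear superstring of P of minimum length (i.e., every linear superstring w of P satisfies w₀.length ≤ w.length) and c₀ is a circular superstring of f(P) of minimum length (i.e., every circular superstring c of f(P) satisfies c₀.length ≤ c.length). Then c₀.length = 2 * w₀.length. -/
/-- `lift w` embeds a string over `α` into the barred alphabet `α ⊕ α` using unbarred letters. -/
def lift {α : Type*} (w : List α) : List (α ⊕ α) := w.map Sum.inl

/-- `bar w` embeds a string over `α` into the barred alphabet `α ⊕ α` using barred letters. -/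
def bar {α : Type*} (w : List α) : List (α ⊕ α) := w.map Sum.inr

/-- `f(P) = {lift s | s ∈ P} ∪ {bar s | s ∈ P}`. -/
def barred {α : Type*} (P : Set (List α)) : Set (List (α ⊕ α)) := (lift '' P) ∪ (bar '' P)

/-- A linear superstring of `P` contains every string of `P` as an infix. -/
def IsLinearSuperstring {β : Type*} (P : Set (List β)) (w : List β) : Prop := ∀ s ∈ P, s <:+: w

/-- `s` is a circular substring of the circular string `c` if `s` is an infix of `c^n`
for some `n ≥ 1`. -/
def IsCircularSubstring {β : Type*} (c s : List β) : Prop :=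
  ∃ n, 1 ≤ n ∧ s <:+: (List.replicate n c).flatten

/-- A circular superstring of `P` has every string of `P` as a circular substring. -/
def IsCircularSuperstring {β : Type*} (P : Set (List β)) (c : List β) : Prop :=
  ∀ s ∈ P, IsCircularSubstring c s

/-- The `Σ`-restriction of a string over the barred alphabet: keep the unbarred letters. -/
def restrict {α : Type*} (d : List (α ⊕ α)) : List α :=
  d.filterMap (Sum.elim some (fun _ => none))

theorem aux_split {β : Type*} (s U V : List β) (x : β) (hx : x ∉ s)
    (h : s <:+: U ++ x :: V) : s <:+: U ∨ s <:+: V := by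
  obtain ⟨a, b, hab⟩ := h
  rw [List.append_assoc, List.append_eq_append_iff] at hab
  rcases hab with ⟨t, hU, hs⟩ | ⟨t, ha, hs⟩
  · rw [List.append_eq_append_iff] at hs
    rcases hs with ⟨r, ht, hb⟩ | ⟨r, ht, hb⟩
    · left
      exact ⟨a, r, by rw [hU, ht, List.append_assoc]⟩
    · cases r with
      | nil =>
        left
        exact ⟨a, [], by simp_all⟩
      | cons y r =>
        simp only [List.cons_append, List.cons.injEq] at hb
        exact absurd (by rw [ht, hb.1]; simp) hx
  · cases t with
    | nil =>
      simp only [List.nil_append] at hs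
      cases s with
      | nil => left; exact List.nil_infix
      | cons y s =>
        simp only [List.cons_append, List.cons.injEq] at hs
        exact absurd (by rw [hs.1]; simp) hx
    | cons y t =>
      simp only [List.cons_append, List.cons.injEq] at hs
      right
      exact ⟨t, b, by rw [hs.2, List.append_assoc]⟩

theorem aux_circ {β : Type*} (s A B : List β) (x : β) (hx : x ∉ s) (n : ℕ) :
    ∀ Y : List β, Y ++ A <:+: B ++ A →
      s <:+: Y ++ ((List.replicate n (A ++ x :: B)).flatten ++ A) → s <:+: B ++ A := by
  induction n with
  | zero =>
    intro Y hY h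
    exact List.IsInfix.trans (by simpa using h) hY
  | succ n ih =>
    intro Y hY h
    have h' : s <:+: (Y ++ A) ++ x :: (B ++ ((List.replicate n (A ++ x :: B)).flatten ++ A)) := by
      simpa [List.replicate_succ] using h
    rcases aux_split _ _ _ _ hx h' with h1 | h1
    · exact h1.trans hY
    · exact ih B List.infix_rfl h1

theorem aux_main {α β : Type*} (g : β → Option α) (e : α → β) (hge : ∀ a, g (e a) = some a)
    (c : List β) (x : β) (hxc : x ∈ c) (hx : g x = none) :
    ∃ w : List α, w.length = (c.filterMap g).length ∧
      ∀ s : List α, IsCircularSubstring c (s.map e) → s <:+: w := by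
  obtain ⟨A, B, rfl⟩ := List.append_of_mem hxc
  refine ⟨(B ++ A).filterMap g, ?_, ?_⟩
  · simp [List.filterMap_append, List.filterMap_cons, hx, Nat.add_comm]
  · rintro s ⟨n, -, hs⟩
    have hxs : x ∉ s.map e := by
      intro hm
      obtain ⟨a, -, rfl⟩ := List.mem_map.1 hm
      simp [hge] at hx
    have h1 : s.map e <:+: B ++ A :=
      aux_circ _ A B x hxs n [] (List.suffix_append B A).isInfix
        (hs.trans (List.prefix_append _ A).isInfix)
    have h2 := h1.filterMap g
    have h3 : (s.map e).filterMap g = s := by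
      rw [List.filterMap_map]
      have : g ∘ e = some := funext hge
      rw [this, List.filterMap_some]
    rwa [h3] at h2

theorem aux_len {α : Type*} (c : List (α ⊕ α)) :
    (c.filterMap Sum.getLeft?).length + (c.filterMap Sum.getRight?).length = c.length := by
  induction c with
  | nil => rfl
  | cons y c ih => cases y <;> simp [List.filterMap_cons] <;> omega

theorem aux_mem {β : Type*} (c s : List β) (x : β) (hx : x ∈ s) (h : IsCircularSubstring c s) :
    x ∈ c := by
  obtain ⟨n, -, h⟩ := h
  have := h.subset hx
  simp only [List.mem_flatten, List.mem_replicate] at this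
  obtain ⟨l, ⟨-, rfl⟩, hl⟩ := this
  exact hl

/-- The length of a shortest circular superstring of `f(P)` is twice the length of a shortest
linear superstring of `P`. -/
theorem shortest_circular_eq_two_mul_shortest_linear {α : Type*} (P : Set (List α))
    (w₀ : List α) (hw₀ : IsLinearSuperstring P w₀)
    (hw₀min : ∀ w : List α, IsLinearSuperstring P w → w₀.length ≤ w.length)
    (c₀ : List (α ⊕ α)) (hc₀ : IsCircularSuperstring (barred P) c₀)
    (hc₀min : ∀ c : List (α ⊕ α), IsCircularSuperstring (barred P) c → c₀.length ≤ c.length) :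
    c₀.length = 2 * w₀.length := by
  apply le_antisymm
  · have := hc₀min (lift w₀ ++ bar w₀) (by
      rintro _ (⟨s, hs, rfl⟩ | ⟨s, hs, rfl⟩)
      · refine ⟨1, le_rfl, ?_⟩
        simp only [List.replicate_one, List.flatten_singleton]
        exact ((hw₀ s hs).map _).trans (List.prefix_append _ _).isInfix
      · refine ⟨1, le_rfl, ?_⟩
        simp only [List.replicate_one, List.flatten_singleton]
        exact ((hw₀ s hs).map _).trans (List.suffix_append _ _).isInfix)
    simp only [lift, bar, List.length_append, List.length_map] at this
    omega
  · by_cases hP : ∃ s ∈ P, ∃ a, a ∈ s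
    · obtain ⟨s, hs, a, ha⟩ := hP
      have hl : ∀ s ∈ P, IsCircularSubstring c₀ (s.map Sum.inl) :=
        fun s hs => hc₀ _ (Or.inl ⟨s, hs, rfl⟩)
      have hr : ∀ s ∈ P, IsCircularSubstring c₀ (s.map Sum.inr) :=
        fun s hs => hc₀ _ (Or.inr ⟨s, hs, rfl⟩)
      have ml := aux_mem _ _ (Sum.inl a) (List.mem_map_of_mem ha) (hl s hs)
      have mr := aux_mem _ _ (Sum.inr a) (List.mem_map_of_mem ha) (hr s hs)
      obtain ⟨w, hw, hw'⟩ := aux_main Sum.getLeft? Sum.inl (fun _ => rfl) c₀ _ mr rfl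
      obtain ⟨v, hv, hv'⟩ := aux_main Sum.getRight? Sum.inr (fun _ => rfl) c₀ _ ml rfl
      have h1 := hw₀min w fun s hs => hw' s (hl s hs)
      have h2 := hw₀min v fun s hs => hv' s (hr s hs)
      have h3 := aux_len c₀
      omega
    · have := hw₀min [] (by
        intro s hs
        have : s = [] := List.eq_nil_iff_forall_not_mem.2 fun a ha => hP ⟨s, hs, a, ha⟩
        rw [this])
      simp only [List.length_nil] at this
      omega
end

section
/- Let P be a finite set of strings over Σ (P : Finset (List Σ)) and write ‖P‖ = ∑_{s ∈ P} s.length. Suppose w₀ is a linear superstring of P of minimum length, c₀ is a circular superstring of f(P) of minimum length, and c is any circular superstring of f(P). Then there exists a linear superstring w of P with 2 * w.length ≤ c.length such that, as integers, (‖P‖ − w₀.length) * (2‖P‖ − c.length) ≤ (2‖P‖ − c₀.length) * (‖P‖ − w.length) (i.e., the compression-measure approximation ratio is preserved; note ‖f(P)‖ = 2‖P‖). -/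
theorem infix_split_aux {β : Type*} {l u v : List β} {y : β} (hy : y ∉ l)
    (h : l <:+: u ++ y :: v) : l <:+: u ∨ l <:+: v := by
  obtain ⟨p, q, h⟩ := h
  rw [List.append_assoc, List.append_eq_append_iff] at h
  rcases h with ⟨t, rfl, h⟩ | ⟨t, rfl, h⟩
  · rw [List.append_eq_append_iff] at h
    rcases h with ⟨r, rfl, h⟩ | ⟨r, rfl, h⟩
    · exact Or.inl ⟨p, r, by simp⟩
    · cases r with
      | nil => exact Or.inl ⟨p, [], by simp⟩
      | cons z r =>
        simp only [List.cons_append, List.cons.injEq] at h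
        obtain ⟨rfl, -⟩ := h
        simp at hy
  · cases t with
    | nil =>
      cases l with
      | nil => exact Or.inl (List.nil_infix)
      | cons z r =>
        simp only [List.cons_append, List.nil_append, List.cons.injEq] at h
        obtain ⟨rfl, -⟩ := h
        simp at hy
    | cons z t =>
      simp only [List.cons_append, List.cons.injEq] at h
      obtain ⟨-, rfl⟩ := h
      exact Or.inr ⟨t, q, by simp⟩

theorem infix_power_aux {β : Type*} {l a b : List β} {y : β} (hy : y ∉ l) (n : ℕ)
    (h : l <:+: b ++ (List.replicate n (a ++ y :: b)).flatten) : l <:+: b ++ a := by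
  induction n with
  | zero =>
    simp only [List.replicate_zero, List.flatten_nil, List.append_nil] at h
    exact h.trans (List.prefix_append b a).isInfix
  | succ n ih =>
    have e : b ++ (List.replicate (n + 1) (a ++ y :: b)).flatten
        = (b ++ a) ++ y :: (b ++ (List.replicate n (a ++ y :: b)).flatten) := by
      simp [List.replicate_succ]
    rw [e] at h
    rcases infix_split_aux hy h with h | h
    · exact h
    · exact ih h

theorem restrict_lift_aux {α : Type*} (s : List α) : restrict (lift s) = s := by
  induction s with
  | nil => rfl
  | cons x s ih => simp [restrict, lift]

theorem restrict_length_aux {α : Type*} (d : List (α ⊕ α)) :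
    (restrict d).length = d.countP Sum.isLeft := by
  induction d with
  | nil => rfl
  | cons x s ih => cases x <;> simp [restrict, List.countP_cons, List.filterMap_cons] at ih ⊢ <;> omega

theorem left_aux {α : Type*} (P : Set (List α)) (c : List (α ⊕ α))
    (hc : IsCircularSuperstring (barred P) c) :
    ∃ w, IsLinearSuperstring P w ∧ w.length ≤ c.countP Sum.isLeft := by
  by_cases hr : ∃ x, Sum.inr x ∈ c
  · obtain ⟨x, hx⟩ := hr
    obtain ⟨a, b, rfl⟩ := List.append_of_mem hx
    refine ⟨restrict (b ++ a), ?_, ?_⟩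
    · intro s hs
      obtain ⟨n, -, h⟩ := hc (lift s) (Or.inl ⟨s, hs, rfl⟩)
      have h2 := infix_power_aux (l := lift s) (a := a) (b := b) (y := Sum.inr x)
        (by simp [lift]) n (h.trans (List.suffix_append _ _).isInfix)
      obtain ⟨p, q, h2⟩ := h2
      refine ⟨restrict p, restrict q, ?_⟩
      rw [← h2]
      conv_lhs => rw [← restrict_lift_aux s]
      simp [restrict]
    · rw [restrict_length_aux]
      simp [List.countP_append]
      omega
  · refine ⟨[], ?_, by simp⟩
    intro s hs
    obtain ⟨n, -, h⟩ := hc (bar s) (Or.inr ⟨s, hs, rfl⟩)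
    cases s with
    | nil => exact List.nil_infix
    | cons x s =>
      have : Sum.inr x ∈ (List.replicate n c).flatten := h.subset (by simp [bar])
      rw [List.mem_flatten] at this
      obtain ⟨l, hl, hx⟩ := this
      rw [List.eq_of_mem_replicate hl] at hx
      exact (hr ⟨x, hx⟩).elim

theorem swap_aux {α : Type*} (P : Set (List α)) (c : List (α ⊕ α))
    (hc : IsCircularSuperstring (barred P) c) :
    IsCircularSuperstring (barred P) (c.map Sum.swap) := by
  have key : ∀ t, IsCircularSubstring c t →
      IsCircularSubstring (c.map Sum.swap) (t.map Sum.swap) := by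
    rintro t ⟨n, hn, p, q, h⟩
    refine ⟨n, hn, p.map Sum.swap, q.map Sum.swap, ?_⟩
    rw [← List.map_append, ← List.map_append, h, List.map_flatten, List.map_replicate]
  rintro t (⟨s, hs, rfl⟩ | ⟨s, hs, rfl⟩)
  · have := key _ (hc (bar s) (Or.inr ⟨s, hs, rfl⟩))
    simpa [bar, lift, Function.comp_def] using this
  · have := key _ (hc (lift s) (Or.inl ⟨s, hs, rfl⟩))
    simpa [bar, lift, Function.comp_def] using this

theorem count_aux {α : Type*} (c : List (α ⊕ α)) :
    c.countP Sum.isLeft + (c.map Sum.swap).countP Sum.isLeft = c.length := by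
  induction c with
  | nil => rfl
  | cons x s ih => cases x <;> simp [List.countP_cons] at ih ⊢ <;> omega

theorem half_aux {α : Type*} (P : Set (List α)) (c : List (α ⊕ α))
    (hc : IsCircularSuperstring (barred P) c) :
    ∃ w, IsLinearSuperstring P w ∧ 2 * w.length ≤ c.length := by
  obtain ⟨w1, h1, l1⟩ := left_aux P c hc
  obtain ⟨w2, h2, l2⟩ := left_aux P _ (swap_aux P c hc)
  have := count_aux c
  rcases le_total w1.length w2.length with h | h
  · exact ⟨w1, h1, by omega⟩
  · exact ⟨w2, h2, by omega⟩

theorem double_aux {α : Type*} (P : Set (List α)) (w : List α)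
    (hw : IsLinearSuperstring P w) : IsCircularSuperstring (barred P) (lift w ++ bar w) := by
  rintro t (⟨s, hs, rfl⟩ | ⟨s, hs, rfl⟩)
  · refine ⟨1, le_rfl, ?_⟩
    have : lift s <:+: lift w := (hw s hs).map _
    simpa using this.trans (List.prefix_append _ _).isInfix
  · refine ⟨1, le_rfl, ?_⟩
    have : bar s <:+: bar w := (hw s hs).map _
    simpa using this.trans (List.suffix_append _ _).isInfix

theorem concat_aux {α : Type*} (P : Finset (List α)) :
    ∃ w : List α, IsLinearSuperstring (↑P : Set (List α)) w ∧
      w.length = ∑ s ∈ P, s.length := by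
  refine ⟨P.toList.flatten, ?_, ?_⟩
  · intro s hs
    exact List.infix_of_mem_flatten (by simpa using hs)
  · rw [List.length_flatten, Finset.sum_map_toList]

/-- Strict-reduction inequality for the compression measure: from a circular superstring `c` of
`f(P)` one obtains a linear superstring `w` of `P` with `2|w| ≤ |c|` whose compression
approximation ratio for SLS on `P` is at most that of `c` for SCS on `f(P)`
(note `‖f(P)‖ = 2‖P‖`). -/
theorem strict_reduction_compression_measure {α : Type*} (P : Finset (List α))
    (w₀ : List α) (hw₀ : IsLinearSuperstring (↑P : Set (List α)) w₀)
    (hw₀min : ∀ w : List α, IsLinearSuperstring (↑P : Set (List α)) w → w₀.length ≤ w.length)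
    (c₀ : List (α ⊕ α)) (hc₀ : IsCircularSuperstring (barred (↑P : Set (List α))) c₀)
    (hc₀min : ∀ c' : List (α ⊕ α),
      IsCircularSuperstring (barred (↑P : Set (List α))) c' → c₀.length ≤ c'.length)
    (c : List (α ⊕ α)) (hc : IsCircularSuperstring (barred (↑P : Set (List α))) c) :
    ∃ w : List α, IsLinearSuperstring (↑P : Set (List α)) w ∧ 2 * w.length ≤ c.length ∧
      ((∑ s ∈ P, s.length : ℤ) - w₀.length) * (2 * (∑ s ∈ P, s.length : ℤ) - c.length) ≤
        (2 * (∑ s ∈ P, s.length : ℤ) - c₀.length) * ((∑ s ∈ P, s.length : ℤ) - w.length) := by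
  obtain ⟨w, hw, hl⟩ := half_aux _ c hc
  refine ⟨w, hw, hl, ?_⟩
  obtain ⟨w', hw', hl'⟩ := half_aux _ c₀ hc₀
  have h1 := hw₀min w' hw'
  have h2 := hc₀min _ (double_aux _ w₀ hw₀)
  have h3 : c₀.length = 2 * w₀.length := by
    simp [lift, bar] at h2
    omega
  obtain ⟨v, hv, hvl⟩ := concat_aux P
  have h4 := hw₀min v hv
  rw [hvl] at h4
  have h5 : (w₀.length : ℤ) ≤ ∑ s ∈ P, (s.length : ℤ) := by exact_mod_cast h4
  have h6 : (c₀.length : ℤ) = 2 * w₀.length := by exact_mod_cast h3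
  have h7 : 2 * (w.length : ℤ) ≤ c.length := by exact_mod_cast hl
  rw [h6]
  nlinarith [mul_nonneg (sub_nonneg.2 h5) (sub_nonneg.2 h7)]
end
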